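/- Fix σ01 > 0, β0 ∈ ℝ, a sequence of design points w₁, w₂, … in a set 𝒲, and a pair m0 = (m01, m02) of real-valued functions on 𝒲. For each n let the data (Y₁, X₁), …, (Y_n, X_n) be distributed according to a product probability measure P^{(n)} = μ₁ ⊗ ⋯ ⊗ μ_n on (ℝ²)ⁿ. Let D > 0, let δ_n > 0 be a sequence with √n δ_n² → 0, let M_n be sets of pairs of functions, and set S_n = M_n ∩ B_{n,M}(m0, Dδ_n). Assume the suprema below are measurable functions of the data and that sup_{m ∈ S_n} |G_n^{(1)}(m)| → 0 and sup_{m ∈ S_n} |G_n^{(2)}(m)| → 0 in P^{(n)}-probability as n → ∞. Then sup_{m ∈ S_n} | n^{−1/2} ℓ̃_n(β0, m) − n^{−1/2} ℓ̃_n(β0, m0) | → 0 in P^{(n)}-probability as n → ∞. -/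

import Mathlib

/-!
Write `a = m1 - m01`, `b = m2 - m02` at the design points. Expanding the score gives the exact
identity `n^{-1/2} (ℓ̃_n(β0, m) - ℓ̃_n(β0, m0)) = σ01⁻² (-G1 - G2 + n^{-1/2} Σ (a b - β0 b²))`
(`score_sub`). On the empirical ball of radius `r = D δ_n` both `Σ a²` and `Σ b²` are at most
`n r²`, so the quadratic remainder is at most `(1 + |β0|) √n r²`, deterministically and uniformly
in `m`; it tends to `0` by the rate assumption. Hence, for large `n`, the event that the supremum
of the score difference exceeds `ε` lies in the union of the two events that the supremum of
`|G1|`, respectively `|G2|`, exceeds `c = ε σ01² / 3`.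

Since real suprema of unbounded sets are `0` by convention, passing from `sup |G| ≤ c` to
`|G m| ≤ c` also needs the index set to give bounded values; this again follows from the bounds on
`Σ a²` and `Σ b²` (`abs_sum_mul_le`).
-/

open MeasureTheory

namespace Stmt12

variable {𝒲 : Type*}

/-- The score `ℓ̃_n(β, m)` evaluated at data `ω = ((Y_1,X_1),…,(Y_n,X_n))` and design
points `w_1, …, w_n`. -/
noncomputable def score (σ01 : ℝ) (n : ℕ) (w : ℕ → 𝒲) (ω : Fin n → ℝ × ℝ) (β : ℝ)
    (m : (𝒲 → ℝ) × (𝒲 → ℝ)) : ℝ :=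
  (σ01 ^ 2)⁻¹ * ∑ i : Fin n,
    ((ω i).1 - m.1 (w i.1) - ((ω i).2 - m.2 (w i.1)) * β) * ((ω i).2 - m.2 (w i.1))

/-- Empirical `L²` norm over the first `n` design points. -/
noncomputable def normn (n : ℕ) (w : ℕ → 𝒲) (f : 𝒲 → ℝ) : ℝ :=
  Real.sqrt ((n : ℝ)⁻¹ * ∑ i : Fin n, f (w i.1) ^ 2)

/-- Empirical `L²` ball `B_{n,M}(m0, r)` around `m0 = (m01, m02)`. -/
def ball (n : ℕ) (w : ℕ → 𝒲) (m01 m02 : 𝒲 → ℝ) (r : ℝ) :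
    Set ((𝒲 → ℝ) × (𝒲 → ℝ)) :=
  {m | max (normn n w (fun v => m.1 v - m01 v)) (normn n w (fun v => m.2 v - m02 v)) < r}

/-- The multiplier empirical process `G_n^{(1)}(m) = n^{-1/2} Σ_i ε_{i2}(m1(w_i) − m01(w_i))`. -/
noncomputable def G1 (n : ℕ) (w : ℕ → 𝒲) (m01 m02 : 𝒲 → ℝ) (ω : Fin n → ℝ × ℝ)
    (m : (𝒲 → ℝ) × (𝒲 → ℝ)) : ℝ :=
  (Real.sqrt n)⁻¹ * ∑ i : Fin n, ((ω i).2 - m02 (w i.1)) * (m.1 (w i.1) - m01 (w i.1))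

/-- The multiplier empirical process
`G_n^{(2)}(m) = n^{-1/2} Σ_i (U_i − β0 ε_{i2})(m2(w_i) − m02(w_i))`. -/
noncomputable def G2 (β0 : ℝ) (n : ℕ) (w : ℕ → 𝒲) (m01 m02 : 𝒲 → ℝ)
    (ω : Fin n → ℝ × ℝ) (m : (𝒲 → ℝ) × (𝒲 → ℝ)) : ℝ :=
  (Real.sqrt n)⁻¹ * ∑ i : Fin n,
    (((ω i).1 - m01 (w i.1) - ((ω i).2 - m02 (w i.1)) * β0) -
        β0 * ((ω i).2 - m02 (w i.1))) *
      (m.2 (w i.1) - m02 (w i.1))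

/-- Being in the empirical `L²` ball bounds the sum of squares (for `n = 0` both sides vanish). -/
lemma sum_sq_le_of_normn_lt {n : ℕ} {w : ℕ → 𝒲} {f : 𝒲 → ℝ} {r : ℝ}
    (h : normn n w f < r) : ∑ i : Fin n, f (w i.1) ^ 2 ≤ n * r ^ 2 := by
  rcases Nat.eq_zero_or_pos n with rfl | hn
  · simp
  have hn' : (0 : ℝ) < n := by exact_mod_cast hn
  have hr : 0 < r := lt_of_le_of_lt (Real.sqrt_nonneg _) h
  have h2 := ((Real.sqrt_lt' hr).1 h).le
  rwa [inv_mul_le_iff₀ hn'] at h2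

/-- A crude bound, uniform in `f`, for weighted sums; it serves only to show that the suprema of
`|G1|` and `|G2|` are finite for fixed data. -/
lemma abs_sum_mul_le {n : ℕ} (c f : Fin n → ℝ) :
    |∑ i, c i * f i| ≤ ∑ i, c i ^ 2 + ∑ i, f i ^ 2 := by
  rw [← Finset.sum_add_distrib]
  refine (Finset.abs_sum_le_sum_abs _ _).trans (Finset.sum_le_sum fun i _ => ?_)
  rw [abs_le]
  constructor <;> nlinarith [sq_nonneg (c i + f i), sq_nonneg (c i - f i),
    sq_nonneg (c i), sq_nonneg (f i)]

lemma score_sub (σ01 β0 : ℝ) (n : ℕ) (w : ℕ → 𝒲) (m01 m02 : 𝒲 → ℝ) (ω : Fin n → ℝ × ℝ)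
    (m : (𝒲 → ℝ) × (𝒲 → ℝ)) :
    (Real.sqrt n)⁻¹ * (score σ01 n w ω β0 m - score σ01 n w ω β0 (m01, m02)) =
      (σ01 ^ 2)⁻¹ * (-G1 n w m01 m02 ω m - G2 β0 n w m01 m02 ω m +
        (Real.sqrt n)⁻¹ * ∑ i : Fin n,
          ((m.1 (w i.1) - m01 (w i.1)) * (m.2 (w i.1) - m02 (w i.1)) -
            β0 * (m.2 (w i.1) - m02 (w i.1)) ^ 2)) := by
  simp only [score, G1, G2]
  rw [← mul_sub, ← Finset.sum_sub_distrib, ← mul_neg, ← mul_sub, ← mul_add, mul_left_comm,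
    ← Finset.sum_neg_distrib, ← Finset.sum_sub_distrib, ← Finset.sum_add_distrib]
  congr 2
  refine Finset.sum_congr rfl fun i _ => ?_
  ring

lemma abs_remainder_le {n : ℕ} (β0 r : ℝ) (a b : Fin n → ℝ)
    (ha : ∑ i, a i ^ 2 ≤ n * r ^ 2) (hb : ∑ i, b i ^ 2 ≤ n * r ^ 2) :
    |(Real.sqrt n)⁻¹ * ∑ i, (a i * b i - β0 * b i ^ 2)| ≤
      (1 + |β0|) * (Real.sqrt n * r ^ 2) := by
  have h1 : |∑ i, (a i * b i - β0 * b i ^ 2)| ≤ (1 + |β0|) * (n * r ^ 2) := by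
    have h2 : |∑ i, (a i * b i - β0 * b i ^ 2)| ≤
        ∑ i, (a i ^ 2 / 2 + b i ^ 2 / 2 + |β0| * b i ^ 2) := by
      refine (Finset.abs_sum_le_sum_abs _ _).trans (Finset.sum_le_sum fun i _ => ?_)
      have h3 : |a i * b i| ≤ a i ^ 2 / 2 + b i ^ 2 / 2 := by
        rw [abs_le]
        constructor <;> nlinarith [sq_nonneg (a i + b i), sq_nonneg (a i - b i)]
      have h4 : |β0 * b i ^ 2| = |β0| * b i ^ 2 := by
        rw [abs_mul, abs_of_nonneg (sq_nonneg (b i))]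
      linarith [abs_sub (a i * b i) (β0 * b i ^ 2)]
    rw [Finset.sum_add_distrib, Finset.sum_add_distrib, ← Finset.sum_div, ← Finset.sum_div,
      ← Finset.mul_sum] at h2
    linarith [mul_le_mul_of_nonneg_left hb (abs_nonneg β0)]
  have h5 : (Real.sqrt n)⁻¹ * n = Real.sqrt n := by
    rw [inv_mul_eq_div, Real.div_sqrt]
  rw [abs_mul, abs_of_nonneg (inv_nonneg.2 (Real.sqrt_nonneg _))]
  calc (Real.sqrt n)⁻¹ * |∑ i, (a i * b i - β0 * b i ^ 2)|
      ≤ (Real.sqrt n)⁻¹ * ((1 + |β0|) * (n * r ^ 2)) :=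
        mul_le_mul_of_nonneg_left h1 (inv_nonneg.2 (Real.sqrt_nonneg _))
    _ = (1 + |β0|) * (((Real.sqrt n)⁻¹ * n) * r ^ 2) := by ring
    _ = _ := by rw [h5]

/-- For fixed data the values `|n^{-1/2} Σ c_i f(m)(w_i)|` over an index set with uniformly
bounded `Σ f(m)(w_i)²` form a bounded set, so their real supremum is a genuine one. -/
lemma bddAbove_image {ι : Type*} {n : ℕ} (S : Set ι) (c : Fin n → ℝ) (f : ι → Fin n → ℝ) (K : ℝ)
    (hf : ∀ m ∈ S, ∑ i, f m i ^ 2 ≤ K) :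
    BddAbove ((fun m => |(Real.sqrt n)⁻¹ * ∑ i, c i * f m i|) '' S) := by
  refine ⟨(Real.sqrt n)⁻¹ * (∑ i, c i ^ 2 + K), ?_⟩
  rintro _ ⟨m, hm, rfl⟩
  have h0 : 0 ≤ (Real.sqrt n)⁻¹ := inv_nonneg.2 (Real.sqrt_nonneg _)
  simp only [abs_mul, abs_of_nonneg h0]
  exact mul_le_mul_of_nonneg_left
    ((abs_sum_mul_le c (f m)).trans (by linarith [hf m hm])) h0

/-- stochastic equicontinuity of the multiplier empirical processes over
shrinking empirical `L²` balls implies uniform negligibility of the normalized score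
difference, in `P^{(n)}`-probability. -/
theorem stmt12 [MeasurableSpace 𝒲]
    (σ01 : ℝ) (hσ01 : 0 < σ01) (β0 : ℝ) (w : ℕ → 𝒲) (m01 m02 : 𝒲 → ℝ)
    (μs : ℕ → Measure (ℝ × ℝ)) [∀ i, IsProbabilityMeasure (μs i)]
    (D : ℝ) (hD : 0 < D) (δ : ℕ → ℝ) (hδpos : ∀ n, 0 < δ n)
    (hδrate : Filter.Tendsto (fun n : ℕ => Real.sqrt n * δ n ^ 2) Filter.atTop (nhds 0))
    (Mn : ℕ → Set ((𝒲 → ℝ) × (𝒲 → ℝ)))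
    (hmeas1 : ∀ n : ℕ, Measurable fun ω : Fin n → ℝ × ℝ =>
      sSup ((fun m => |G1 n w m01 m02 ω m|) '' (Mn n ∩ ball n w m01 m02 (D * δ n))))
    (hmeas2 : ∀ n : ℕ, Measurable fun ω : Fin n → ℝ × ℝ =>
      sSup ((fun m => |G2 β0 n w m01 m02 ω m|) '' (Mn n ∩ ball n w m01 m02 (D * δ n))))
    (hmeas3 : ∀ n : ℕ, Measurable fun ω : Fin n → ℝ × ℝ =>
      sSup ((fun m => |(Real.sqrt n)⁻¹ *
          (score σ01 n w ω β0 m - score σ01 n w ω β0 (m01, m02))|) ''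
        (Mn n ∩ ball n w m01 m02 (D * δ n))))
    (hG1 : ∀ ε : ℝ, 0 < ε → Filter.Tendsto (fun n : ℕ =>
      Measure.pi (fun i : Fin n => μs i.1)
        {ω | ε < sSup ((fun m => |G1 n w m01 m02 ω m|) ''
          (Mn n ∩ ball n w m01 m02 (D * δ n)))})
      Filter.atTop (nhds 0))
    (hG2 : ∀ ε : ℝ, 0 < ε → Filter.Tendsto (fun n : ℕ =>
      Measure.pi (fun i : Fin n => μs i.1)
        {ω | ε < sSup ((fun m => |G2 β0 n w m01 m02 ω m|) ''
          (Mn n ∩ ball n w m01 m02 (D * δ n)))})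
      Filter.atTop (nhds 0)) :
    ∀ ε : ℝ, 0 < ε → Filter.Tendsto (fun n : ℕ =>
      Measure.pi (fun i : Fin n => μs i.1)
        {ω | ε < sSup ((fun m => |(Real.sqrt n)⁻¹ *
            (score σ01 n w ω β0 m - score σ01 n w ω β0 (m01, m02))|) ''
          (Mn n ∩ ball n w m01 m02 (D * δ n)))})
      Filter.atTop (nhds 0) := by
  intro ε hε
  set c : ℝ := ε * σ01 ^ 2 / 3 with hc
  have hcpos : 0 < c := by positivity
  have hrem : Filter.Tendsto
      (fun n : ℕ => (1 + |β0|) * (Real.sqrt n * (D * δ n) ^ 2)) Filter.atTop (nhds 0) := by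
    have h := hδrate.const_mul ((1 + |β0|) * D ^ 2)
    rw [mul_zero] at h
    refine h.congr fun n => ?_
    ring
  have hsum := (hG1 c hcpos).add (hG2 c hcpos)
  rw [add_zero] at hsum
  refine tendsto_of_tendsto_of_tendsto_of_le_of_le' tendsto_const_nhds hsum
    (Filter.Eventually.of_forall fun _ => zero_le) ?_
  filter_upwards [hrem.eventually (gt_mem_nhds hcpos)] with n hn
  refine (measure_mono ?_).trans (measure_union_le _ _)
  intro ω hω
  by_contra hnot
  simp only [Set.mem_union, Set.mem_setOf_eq, not_or, not_lt] at hnot hω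
  obtain ⟨h1, h2⟩ := hnot
  have hsq : ∀ m ∈ Mn n ∩ ball n w m01 m02 (D * δ n),
      ∑ i : Fin n, (m.1 (w i.1) - m01 (w i.1)) ^ 2 ≤ n * (D * δ n) ^ 2 ∧
      ∑ i : Fin n, (m.2 (w i.1) - m02 (w i.1)) ^ 2 ≤ n * (D * δ n) ^ 2 := fun m hm =>
    ⟨sum_sq_le_of_normn_lt (f := fun v => m.1 v - m01 v) (max_lt_iff.1 hm.2).1,
      sum_sq_le_of_normn_lt (f := fun v => m.2 v - m02 v) (max_lt_iff.1 hm.2).2⟩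
  refine absurd hω (not_lt.2 (Real.sSup_le ?_ hε.le))
  rintro _ ⟨m, hm, rfl⟩
  have hb1 : |G1 n w m01 m02 ω m| ≤ c :=
    (le_csSup (bddAbove_image (Mn n ∩ ball n w m01 m02 (D * δ n)) _
      (fun m (i : Fin n) => m.1 (w i.1) - m01 (w i.1)) _ fun m hm => (hsq m hm).1)
      (Set.mem_image_of_mem _ hm)).trans h1
  have hb2 : |G2 β0 n w m01 m02 ω m| ≤ c :=
    (le_csSup (bddAbove_image (Mn n ∩ ball n w m01 m02 (D * δ n)) _
      (fun m (i : Fin n) => m.2 (w i.1) - m02 (w i.1)) _ fun m hm => (hsq m hm).2)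
      (Set.mem_image_of_mem _ hm)).trans h2
  have hb3 := (abs_remainder_le β0 (D * δ n) (fun i : Fin n => m.1 (w i.1) - m01 (w i.1))
    (fun i : Fin n => m.2 (w i.1) - m02 (w i.1)) (hsq m hm).1 (hsq m hm).2).trans hn.le
  simp only [score_sub]
  have hσ2 : 0 < σ01 ^ 2 := by positivity
  rw [abs_mul, abs_of_pos (inv_pos.2 hσ2), inv_mul_le_iff₀ hσ2]
  rw [abs_le] at hb1 hb2 hb3 ⊢
  constructor <;> linarith

end Stmt12
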